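/- Let n ≥ 3 and let A, B ⊆ ℝⁿ be Borel sets with dimH A > 2 and dimH B > 2. Then the set of unit vectors e ∈ S^{n−1} for which the set π_e(A) ∩ π_e(B) ⊆ ℝ has non-empty interior has positive (n−1)-dimensional Hausdorff measure in S^{n−1}. -/

import Mathlib

open MeasureTheory Metric Set
open scoped ENNReal RealInnerProductSpace

section NetContent

variable {X ι : Type*}

/-- The content of a set with respect to the cells `q k ⁻¹' {i}`, a cell of level `k` having
weight `w k`. -/
noncomputable def netContent (q : ℕ → X → ι) (w : ℕ → ℝ≥0∞) : OuterMeasure X :=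
  OuterMeasure.boundedBy fun S => ⨅ (k : ℕ) (i : ι) (_ : S ⊆ q k ⁻¹' {i}), w k

variable {q : ℕ → X → ι} {w : ℕ → ℝ≥0∞} {p : ι → ι}

lemma netContent_le {S : Set X} {k : ℕ} {i : ι} (h : S ⊆ q k ⁻¹' {i}) :
    netContent q w S ≤ w k :=
  (OuterMeasure.boundedBy_le S).trans (iInf_le_of_le k (iInf_le_of_le i (iInf_le _ h)))

lemma le_netContent {μ : OuterMeasure X}
    (h : ∀ S k i, S ⊆ q k ⁻¹' {i} → μ S ≤ w k) : μ ≤ netContent q w := by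
  refine OuterMeasure.le_boundedBy.2 fun S => ?_
  exact le_iInf fun k => le_iInf fun i => le_iInf fun hS => h S k i hS

lemma iterate_parent (hq : ∀ k x, p (q (k + 1) x) = q k x) (k d : ℕ) (x : X) :
    p^[d] (q (k + d) x) = q k x := by
  induction d with
  | zero => rfl
  | succ d ih => rw [Function.iterate_succ_apply, ← Nat.add_assoc, hq, ih]

/-- A cell is the union of its children. -/
lemma subset_iUnion_children (hq : ∀ k x, p (q (k + 1) x) = q k x) {S : Set X} {k : ℕ} {i : ι}
    (h : S ⊆ q k ⁻¹' {i}) :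
    S ⊆ ⋃ j : p ⁻¹' {i}, S ∩ q (k + 1) ⁻¹' {j.1} := fun x hx =>
  mem_iUnion.2 ⟨⟨q (k + 1) x, by simpa [hq] using h hx⟩, hx, rfl⟩

/-- Either a cell itself is an optimal cover, or covering its children separately is. -/
lemma min_tsum_children_le_netContent (hq : ∀ k x, p (q (k + 1) x) = q k x) (hw : Antitone w)
    (S : Set X) (k : ℕ) (i : ι) :
    min (w k) (∑' j : p ⁻¹' {i}, netContent q w (S ∩ q (k + 1) ⁻¹' {j.1}))
      ≤ netContent q w S := by
  let θ : OuterMeasure X :=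
    { measureOf := fun S =>
        min (w k) (∑' j : p ⁻¹' {i}, netContent q w (S ∩ q (k + 1) ⁻¹' {j.1}))
      empty := by simp
      mono := fun {s t} h => by gcongr
      iUnion_nat := fun s _ => by
        by_cases hs : ∃ n, w k ≤ ∑' j : p ⁻¹' {i}, netContent q w (s n ∩ q (k + 1) ⁻¹' {j.1})
        · obtain ⟨n, hn⟩ := hs
          refine le_trans ?_ (ENNReal.le_tsum n)
          rw [min_eq_left hn]
          exact min_le_left _ _
        · push Not at hs
          refine (min_le_right _ _).trans ?_
          simp_rw [fun n => min_eq_right (hs n).le]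
          rw [ENNReal.tsum_comm]
          refine ENNReal.tsum_le_tsum fun j => ?_
          rw [iUnion_inter]
          exact measure_iUnion_le _ }
  refine le_netContent (μ := θ) (fun S k' i' hS => ?_) S
  change min (w k) _ ≤ _
  rcases le_or_gt k' k with hk | hk
  · exact (min_le_left _ _).trans (hw hk)
  obtain ⟨d, rfl⟩ := Nat.exists_eq_add_of_le (Nat.succ_le_of_lt hk)
  refine (min_le_right _ _).trans ?_
  have key : ∀ j : p ⁻¹' {i}, j.1 ≠ p^[d] i' →
      netContent q w (S ∩ q (k + 1) ⁻¹' {j.1}) = 0 := by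
    intro j hj
    convert measure_empty (μ := netContent q w)
    refine eq_empty_of_forall_notMem fun x hx => hj ?_
    rw [← hS hx.1]
    exact hx.2.symm.trans (iterate_parent hq (k + 1) d x).symm
  by_cases hj : p^[d] i' ∈ p ⁻¹' {i}
  · rw [tsum_eq_single ⟨_, hj⟩ fun j hne => key j fun h => hne (Subtype.ext h)]
    exact netContent_le (inter_subset_left.trans hS)
  · rw [ENNReal.tsum_eq_zero.2 fun j => key j fun h => hj (h ▸ j.2)]
    exact zero_le

/-- A set which occupies at most a fixed proportion `θ < 1` of each cell is null. -/
lemma netContent_eq_zero_of_le_mul {θ : ℝ≥0∞} (hθ0 : θ ≠ 0) (hθ : θ < 1) {F : Set X}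
    (hF : netContent q w F ≠ ∞)
    (h : ∀ k i, netContent q w (F ∩ q k ⁻¹' {i}) ≤ θ * w k) : netContent q w F = 0 := by
  have hle : netContent q w F ≤ θ * netContent q w F := by
    have hθt : θ ≠ ∞ := (hθ.trans ENNReal.one_lt_top).ne
    have : OuterMeasure.restrict F (netContent q w) ≤ θ • netContent q w := by
      rw [netContent, OuterMeasure.smul_boundedBy hθt]
      refine OuterMeasure.le_boundedBy.2 fun S => ?_
      rw [Pi.smul_apply, smul_eq_mul]
      simp_rw [ENNReal.mul_iInf_of_ne hθ0 hθt]
      refine le_iInf fun k => le_iInf fun i => le_iInf fun hS => ?_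
      rw [OuterMeasure.restrict_apply, inter_comm]
      exact (measure_mono (inter_subset_inter_right F hS)).trans (h k i)
    simpa using this F
  by_contra h0
  have := ENNReal.mul_lt_mul_left h0 hF hθ
  rw [one_mul] at this
  exact absurd hle (not_le.2 this)

/-- The weight of the cells `d` levels below `(k, i)` which belong to `T`, with no earlier
descendant of `(k, i)` belonging to `T`. -/
noncomputable def firstHitWeight (p : ι → ι) (w : ℕ → ℝ≥0∞) (T : Set (ℕ × ι)) :
    ℕ → ℕ → ι → ℝ≥0∞
  | 0, k, i => by classical exact if (k, i) ∈ T then w k else 0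
  | d + 1, k, i => by
      classical exact if (k, i) ∈ T then 0
        else ∑' j : p ⁻¹' {i}, firstHitWeight p w T d (k + 1) j

lemma netContent_firstHit_le [Countable ι] (hq : ∀ k x, p (q (k + 1) x) = q k x)
    (T : Set (ℕ × ι)) (d k : ℕ) (i : ι) :
    netContent q w {x | q k x = i ∧ (k + d, q (k + d) x) ∈ T ∧
      ∀ l < d, (k + l, q (k + l) x) ∉ T} ≤ firstHitWeight p w T d k i := by
  induction d generalizing k i with
  | zero =>
    by_cases h : (k, i) ∈ T
    · rw [firstHitWeight, if_pos h]
      exact netContent_le (i := i) fun x hx => hx.1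
    · rw [firstHitWeight, if_neg h]
      refine (measure_mono_null (t := ∅) ?_ measure_empty).le
      rintro x ⟨rfl, hx, -⟩
      exact h hx
  | succ d ih =>
    by_cases h : (k, i) ∈ T
    · rw [firstHitWeight, if_pos h]
      refine (measure_mono_null (t := ∅) ?_ measure_empty).le
      rintro x ⟨rfl, -, hx⟩
      exact hx 0 d.succ_pos h
    · rw [firstHitWeight, if_neg h]
      refine le_trans ?_ (ENNReal.tsum_le_tsum fun j => ih (k + 1) j)
      refine le_trans (measure_mono ?_) (measure_iUnion_le _)
      rintro x ⟨rfl, hx, hx'⟩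
      refine mem_iUnion.2 ⟨⟨q (k + 1) x, hq k x⟩, rfl, ?_, fun l hl => ?_⟩
      · rwa [Nat.add_right_comm]
      · have := hx' (l + 1) (by lia)
        rwa [Nat.add_right_comm]

lemma mul_sum_firstHitWeight_le {θ : ℝ≥0∞} {T : Set (ℕ × ι)} {m : ℕ → ι → ℝ≥0∞}
    (hT : ∀ k i, (k, i) ∈ T → θ * w k ≤ m k i)
    (hm : ∀ k i, (k, i) ∉ T → ∑' j : p ⁻¹' {i}, m (k + 1) j ≤ m k i) (d k : ℕ) (i : ι) :
    θ * ∑ l ∈ Finset.range d, firstHitWeight p w T l k i ≤ m k i := by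
  induction d generalizing k i with
  | zero => simp
  | succ d ih =>
    by_cases h : (k, i) ∈ T
    · rw [Finset.sum_range_succ']
      simpa [firstHitWeight, h] using hT k i h
    · rw [Finset.sum_range_succ']
      simp only [firstHitWeight, h, if_false, add_zero]
      rw [← Summable.tsum_finsetSum fun _ _ => ENNReal.summable, ← ENNReal.tsum_mul_left]
      exact le_trans (ENNReal.tsum_le_tsum fun j => ih (k + 1) j.1) (hm k i h)

/-- Inside a cell, the net content is continuous along increasing sequences of sets. -/
lemma netContent_iUnion_le [Countable ι] (hq : ∀ k x, p (q (k + 1) x) = q k x)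
    (hw : Antitone w) (hw0 : w 0 ≠ ∞) {E : ℕ → Set X} (hE : Monotone E) {i : ι}
    (hi : ∀ n, E n ⊆ q 0 ⁻¹' {i}) :
    netContent q w (⋃ n, E n) ≤ ⨆ n, netContent q w (E n) := by
  refine ENNReal.le_of_forall_lt_one_mul_le fun θ hθ => ?_
  rcases eq_or_ne θ 0 with rfl | hθ0
  · simp
  set m : ℕ → ι → ℝ≥0∞ := fun k i => ⨆ n, netContent q w (E n ∩ q k ⁻¹' {i}) with hm
  set T : Set (ℕ × ι) := {c | θ * w c.1 ≤ m c.1 c.2} with hT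
  have hfin : ∀ {F : Set X}, F ⊆ q 0 ⁻¹' {i} → netContent q w F ≠ ∞ := fun h =>
    ((netContent_le h).trans_lt hw0.lt_top).ne
  have hrest : ∀ n, netContent q w {x ∈ E n | ∀ k, (k, q k x) ∉ T} = 0 := by
    intro n
    refine netContent_eq_zero_of_le_mul hθ0 hθ (hfin fun x hx => hi n hx.1) fun k j => ?_
    rcases eq_empty_or_nonempty ({x ∈ E n | ∀ k, (k, q k x) ∉ T} ∩ q k ⁻¹' {j}) with h | h
    · simp [h]
    · obtain ⟨x, ⟨-, hx⟩, rfl⟩ := h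
      refine le_trans ?_ (not_le.1 (hx k)).le
      refine le_trans (measure_mono ?_) (le_iSup (fun n => netContent q w (E n ∩ _)) n)
      exact inter_subset_inter_left _ fun y hy => hy.1
  have hchild : ∀ k j, (k, j) ∉ T → ∑' l : p ⁻¹' {j}, m (k + 1) l ≤ m k j := by
    intro k j hkj
    have hlt : m k j < w k := (not_le.1 hkj).trans_le (mul_le_of_le_one_left' hθ.le)
    simp only [hm]
    rw [ENNReal.tsum_eq_iSup_sum]
    refine iSup_le fun F => ?_
    rw [ENNReal.finsetSum_iSup_of_monotone
      (f := fun (l : p ⁻¹' {j}) n => netContent q w (E n ∩ q (k + 1) ⁻¹' {l.1})) fun l n n' hn =>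
      measure_mono (inter_subset_inter_left _ (hE hn))]
    refine iSup_mono fun n => (ENNReal.sum_le_tsum F).trans ?_
    have h1 := min_tsum_children_le_netContent hq hw (E n ∩ q k ⁻¹' {j}) k j
    have h2 : netContent q w (E n ∩ q k ⁻¹' {j}) < w k := (le_iSup _ n).trans_lt hlt
    rcases min_le_iff.1 h1 with h | h
    · exact absurd h (not_le.2 h2)
    · refine le_trans (ENNReal.tsum_le_tsum fun l => measure_mono ?_) h
      rintro x ⟨hx, hxl⟩
      refine ⟨⟨hx, ?_⟩, hxl⟩
      rw [mem_preimage, ← hq, hxl]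
      exact l.2
  have hcover : (⋃ n, E n) ⊆ (⋃ n, {x ∈ E n | ∀ k, (k, q k x) ∉ T}) ∪
      ⋃ d, {x | q 0 x = i ∧ (0 + d, q (0 + d) x) ∈ T ∧ ∀ l < d, (0 + l, q (0 + l) x) ∉ T} := by
    intro x hx
    obtain ⟨n, hn⟩ := mem_iUnion.1 hx
    by_cases h : ∃ k, (k, q k x) ∈ T
    · classical
      refine Or.inr (mem_iUnion.2 ⟨Nat.find h, hi n hn, ?_, fun l hl => ?_⟩)
      · simpa using Nat.find_spec h
      · simpa using Nat.find_min h hl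
    · push Not at h
      exact Or.inl (mem_iUnion.2 ⟨n, hn, h⟩)
  calc θ * netContent q w (⋃ n, E n)
      ≤ θ * (0 + ∑' d, firstHitWeight p w T d 0 i) := by
        gcongr
        refine (measure_mono hcover).trans ((measure_union_le _ _).trans (add_le_add ?_ ?_))
        · exact (measure_iUnion_null hrest).le
        · exact (measure_iUnion_le _).trans
            (ENNReal.tsum_le_tsum fun d => netContent_firstHit_le hq T d 0 i)
    _ ≤ m 0 i := by
        rw [zero_add, ENNReal.tsum_eq_iSup_nat, ENNReal.mul_iSup]
        exact iSup_le fun d => mul_sum_firstHitWeight_le (fun k i h => h) hchild d 0 i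
    _ ≤ ⨆ n, netContent q w (E n) := iSup_mono fun n => measure_mono inter_subset_left

/-- Mass transport down the tree of cells: a set of content at least `t` carries a measure of mass
`t` which is dominated by the weights of the cells of a prescribed finite number of levels. -/
lemma exists_measure_le_weight [Countable ι] [MeasurableSpace X] [MeasurableSingletonClass X]
    (hq : ∀ k x, p (q (k + 1) x) = q k x) (hqm : ∀ k i, MeasurableSet (q k ⁻¹' {i}))
    (hp : ∀ i, (p ⁻¹' {i}).Finite) (hwt : ∀ k, w k ≠ ∞) (d k : ℕ) (i : ι) (E : Set X)
    (hE : E ⊆ q k ⁻¹' {i}) (t : ℝ≥0∞) (ht : t ≤ netContent q w E) :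
    ∃ μ : Measure X, μ Eᶜ = 0 ∧ μ univ = t ∧
      ∀ l ≤ d, ∀ j, μ (q (k + l) ⁻¹' {j}) ≤ w (k + l) := by
  induction d generalizing k i E t with
  | zero =>
    have htw : t ≤ w k := ht.trans (netContent_le hE)
    rcases E.eq_empty_or_nonempty with rfl | ⟨x, hx⟩
    · have : t = 0 := by simpa using ht
      exact ⟨0, by simp [this]⟩
    · refine ⟨t • Measure.dirac x, by simp [hx], by simp, fun l hl j => ?_⟩
      obtain rfl : l = 0 := by lia
      exact le_trans (measure_mono (subset_univ _)) (by simpa using htw)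
  | succ d ih =>
    have htw : t ≤ w k := ht.trans (netContent_le hE)
    have : Finite (p ⁻¹' {i}) := hp i
    set a : p ⁻¹' {i} → ℝ≥0∞ := fun j => netContent q w (E ∩ q (k + 1) ⁻¹' {j.1}) with ha
    set s : ℝ≥0∞ := ∑' j, a j with hs
    have hts : t ≤ s := ht.trans ((measure_mono (subset_iUnion_children hq hE)).trans
      (measure_iUnion_le _))
    have hst : s ≠ ∞ := by
      have := Fintype.ofFinite (p ⁻¹' {i})
      rw [hs, tsum_fintype]
      exact ENNReal.sum_ne_top.2 fun j _ =>
        ((netContent_le inter_subset_right).trans_lt (hwt (k + 1)).lt_top).ne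
    have hsum : ∑' j, t / s * a j = t := by
      rw [ENNReal.tsum_mul_left, ← hs]
      rcases eq_or_ne s 0 with h0 | h0
      · rw [h0] at hts ⊢
        simpa [eq_comm] using hts
      · exact ENNReal.div_mul_cancel h0 hst
    choose μ hμE hμt hμw using fun j : p ⁻¹' {i} =>
      ih (k + 1) j.1 (E ∩ q (k + 1) ⁻¹' {j.1}) inter_subset_right (t / s * a j)
        (mul_le_of_le_one_left' (ENNReal.div_le_of_le_mul (by simpa using hts)))
    refine ⟨Measure.sum μ, ?_, ?_, fun l hl j => ?_⟩
    · refine (Measure.sum_apply_eq_zero).2 fun j => ?_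
      exact measure_mono_null (compl_subset_compl.2 inter_subset_left) (hμE j)
    · rw [Measure.sum_apply _ MeasurableSet.univ]
      simp_rw [hμt, hsum]
    · rcases l with - | l
      · refine (measure_mono (subset_univ _)).trans ?_
        rw [Measure.sum_apply _ MeasurableSet.univ]
        simp_rw [hμt, hsum]
        exact htw
      rw [Measure.sum_apply _ (hqm _ _)]
      have key : ∀ c : p ⁻¹' {i}, c.1 ≠ p^[l] j → μ c (q (k + (l + 1)) ⁻¹' {j}) = 0 := by
        intro c hc
        refine measure_mono_null (t := (E ∩ q (k + 1) ⁻¹' {c.1})ᶜ) (fun x hx hx' => hc ?_) (hμE c)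
        rw [← (show q (k + (l + 1)) x = j from hx), ← (show q (k + 1) x = c.1 from hx'.2),
          ← iterate_parent hq (k + 1) l x, Nat.add_assoc, Nat.add_comm 1 l]
      by_cases hj : p^[l] j ∈ p ⁻¹' {i}
      · rw [tsum_eq_single ⟨_, hj⟩ fun c hne => key c fun h => hne (Subtype.ext h)]
        have := hμw ⟨_, hj⟩ l (by lia) j
        rwa [Nat.add_assoc, Nat.add_comm 1 l] at this
      · rw [ENNReal.tsum_eq_zero.2 fun c => key c fun h => hj (h ▸ c.2)]
        exact zero_le

end NetContent

section Frostman

open Filter Topology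

lemma isCompact_setOf_forall_le (N : ℕ → ℕ) : IsCompact {x : ℕ → ℕ | ∀ i, x i ≤ N i} := by
  convert isCompact_univ_pi fun i => (finite_Iic (N i)).isCompact using 1
  ext x
  simp [Pi.le_def]

/-- The truncations `{x | ∀ i < k, x i ≤ N i}` shrink to the compact set `{x | ∀ i, x i ≤ N i}`. -/
lemma exists_truncation_subset {N : ℕ → ℕ} {U : Set (ℕ → ℕ)} (hU : IsOpen U)
    (hN : {x : ℕ → ℕ | ∀ i, x i ≤ N i} ⊆ U) :
    ∃ k, {x : ℕ → ℕ | ∀ i < k, x i ≤ N i} ⊆ U := by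
  have hcyl : ∀ x ∈ {x : ℕ → ℕ | ∀ i, x i ≤ N i}, ∃ m, PiNat.cylinder x m ⊆ U := by
    intro x hx
    obtain ⟨_, ⟨y, m, rfl⟩, hxy, hsub⟩ :=
      (PiNat.isTopologicalBasis_cylinders fun _ => ℕ).exists_subset_of_mem_open (hN hx) hU
    exact ⟨m, by rwa [PiNat.mem_cylinder_iff_eq.1 hxy]⟩
  choose! m hm using hcyl
  obtain ⟨t, ht, htc⟩ := (isCompact_setOf_forall_le N).elim_nhds_subcover
    (fun x => PiNat.cylinder x (m x))
    fun x _ => (PiNat.isOpen_cylinder _ x (m x)).mem_nhds (PiNat.self_mem_cylinder x _)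
  refine ⟨t.sup m, fun x hx => ?_⟩
  obtain ⟨y, hyt, hy⟩ := mem_iUnion₂.1
    (htc (show (fun i => min (x i) (N i)) ∈ {x : ℕ → ℕ | ∀ i, x i ≤ N i} from
      fun i => min_le_right _ _))
  refine hm y (ht y hyt) fun i hi => ?_
  rw [← hy i hi]
  exact (min_eq_left (hx i (hi.trans_le (Finset.le_sup hyt)))).symm

/-- Capacitability of analytic sets for a capacity `M`, stated in terms of a decreasing sequence
of sets shrinking to a compact set. -/
lemma exists_compact_forall_lt_of_analytic {X : Type*} [TopologicalSpace X]
    {f : (ℕ → ℕ) → X} (hf : Continuous f) {M : Set X → ℝ≥0∞}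
    (hM : ∀ E : ℕ → Set X, Monotone E → (⋃ n, E n) ⊆ range f → M (⋃ n, E n) ≤ ⨆ n, M (E n))
    {c : ℝ≥0∞} (hc : c < M (range f)) :
    ∃ K ⊆ range f, IsCompact K ∧ ∃ E : ℕ → Set X, (∀ k, E k ⊆ range f) ∧ (∀ k, c < M (E k)) ∧
      ∀ U, IsOpen U → K ⊆ U → ∀ᶠ k in atTop, E k ⊆ U := by
  have step : ∀ (k : ℕ) (S : {S : Set (ℕ → ℕ) // c < M (f '' S)}),
      ∃ m, c < M (f '' (S.1 ∩ {x | x k ≤ m})) := by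
    rintro k ⟨S, hS⟩
    have hu : f '' S = ⋃ m, f '' (S ∩ {x | x k ≤ m}) := by
      rw [← image_iUnion, ← inter_iUnion]
      congr
      exact (inter_eq_left.2 fun x _ => mem_iUnion.2 ⟨x k, le_refl (x k)⟩).symm
    have := hM (fun m => f '' (S ∩ {x | x k ≤ m}))
      (fun m m' h => image_mono (inter_subset_inter_right S fun x hx => le_trans hx h))
      (by rw [← hu]; exact image_subset_range _ _)
    rw [← hu] at this
    exact lt_iSup_iff.1 (hS.trans_le this)
  choose m hm using step
  let S : ℕ → {S : Set (ℕ → ℕ) // c < M (f '' S)} := fun k =>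
    Nat.rec ⟨univ, by rwa [image_univ]⟩ (fun k S => ⟨S.1 ∩ {x | x k ≤ m k S}, hm k S⟩) k
  let N : ℕ → ℕ := fun k => m k (S k)
  have hS : ∀ k, (S k).1 = {x | ∀ i < k, x i ≤ N i} := by
    intro k
    induction k with
    | zero => exact (eq_univ_of_forall fun x i hi => absurd hi (Nat.not_lt_zero i)).symm
    | succ k ih =>
      change (S k).1 ∩ {x | x k ≤ N k} = _
      ext x
      simp only [ih, mem_inter_iff, mem_ofPred_eq, Nat.forall_lt_succ_right]
  refine ⟨f '' {x | ∀ i, x i ≤ N i}, image_subset_range _ _, ?_, fun k => f '' (S k).1,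
    fun k => image_subset_range _ _, fun k => (S k).2, fun U hU hKU => ?_⟩
  · exact (isCompact_setOf_forall_le N).image hf
  · obtain ⟨k, hk⟩ := exists_truncation_subset (hU.preimage hf) (image_subset_iff.1 hKU)
    filter_upwards [eventually_ge_atTop k] with l hl
    rw [hS l]
    exact image_subset_iff.2 fun x hx => hk fun i hi => hx i (lt_of_lt_of_le hi hl)

variable {n : ℕ}

/-- The index of the dyadic cube of side `2⁻ᵏ` containing `x`. -/
noncomputable def dyadicIndex (k : ℕ) (x : EuclideanSpace ℝ (Fin n)) : Fin n → ℤ :=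
  fun i => ⌊(2 : ℝ) ^ k * x i⌋

/-- The index of the dyadic cube of twice the side containing a given one. -/
def dyadicParent (v : Fin n → ℤ) : Fin n → ℤ := fun i => v i / 2

/-- The `s`-th power of the side length `2⁻ᵏ`. -/
noncomputable def dyadicWeight (s : ℝ) (k : ℕ) : ℝ≥0∞ := ((2 : ℝ≥0∞)⁻¹ ^ k) ^ s

lemma dyadicWeight_antitone {s : ℝ} (hs : 0 ≤ s) : Antitone (dyadicWeight s) := fun _ _ h =>
  ENNReal.rpow_le_rpow (pow_le_pow_right_of_le_one' (by simp) h) hs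

lemma dyadicWeight_ne_top {s : ℝ} (hs : 0 ≤ s) (k : ℕ) : dyadicWeight s k ≠ ∞ :=
  ENNReal.rpow_ne_top_of_nonneg hs (ENNReal.pow_ne_top (by simp))

lemma dyadicIndex_parent (k : ℕ) (x : EuclideanSpace ℝ (Fin n)) :
    dyadicParent (dyadicIndex (k + 1) x) = dyadicIndex k x := by
  ext i
  have h1 := Int.floor_le ((2 : ℝ) ^ k * x i)
  have h2 := Int.lt_floor_add_one ((2 : ℝ) ^ k * x i)
  have h3 : 2 * ⌊(2 : ℝ) ^ k * x i⌋ ≤ ⌊(2 : ℝ) ^ (k + 1) * x i⌋ := by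
    rw [Int.le_floor, pow_succ]; push_cast; linarith
  have h4 : ⌊(2 : ℝ) ^ (k + 1) * x i⌋ < 2 * ⌊(2 : ℝ) ^ k * x i⌋ + 2 := by
    rw [Int.floor_lt, pow_succ]; push_cast; linarith
  simp only [dyadicIndex, dyadicParent]
  lia

lemma finite_dyadic_children (v : Fin n → ℤ) :
    (dyadicParent ⁻¹' {v}).Finite := by
  refine (finite_Icc (fun i => 2 * v i) (fun i => 2 * v i + 1)).subset ?_
  rintro u rfl
  exact ⟨fun i => by simp only [dyadicParent]; lia, fun i => by simp only [dyadicParent]; lia⟩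

lemma measurable_dyadicIndex (k : ℕ) :
    Measurable (dyadicIndex k : EuclideanSpace ℝ (Fin n) → Fin n → ℤ) := by
  refine measurable_pi_lambda _ fun i => ?_
  exact Int.measurable_floor.comp (by fun_prop)

lemma abs_sub_lt_of_dyadicIndex_eq {k : ℕ} {x y : EuclideanSpace ℝ (Fin n)}
    (h : dyadicIndex k x = dyadicIndex k y) (i : Fin n) : |x i - y i| ≤ (2⁻¹ : ℝ) ^ k := by
  have h1 : |(2 : ℝ) ^ k * x i - 2 ^ k * y i| < 1 := Int.abs_sub_lt_one_of_floor_eq_floor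
    (congrFun h i)
  rw [← mul_sub, abs_mul, abs_of_pos (by positivity)] at h1
  rw [inv_pow, ← one_div, le_div_iff₀ (by positivity)]
  linarith

lemma ediam_dyadic_le (k : ℕ) (v : Fin n → ℤ) {S : Set (EuclideanSpace ℝ (Fin n))}
    (hS : S ⊆ dyadicIndex k ⁻¹' {v}) :
    ediam S ≤ (n : ℝ≥0∞) * 2⁻¹ ^ k := by
  refine ediam_le fun x hx y hy => ?_
  have hxy : dyadicIndex k x = dyadicIndex k y := (hS hx).trans (hS hy).symm
  rw [edist_dist, EuclideanSpace.dist_eq]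
  refine ENNReal.ofReal_le_of_le_toReal ?_
  rw [ENNReal.toReal_mul, ENNReal.toReal_pow, ENNReal.toReal_inv, ENNReal.toReal_natCast,
    ENNReal.toReal_ofNat]
  refine Real.sqrt_le_iff.2 ⟨by positivity, ?_⟩
  calc ∑ i, dist (x i) (y i) ^ 2 ≤ ∑ _i : Fin n, ((2⁻¹ : ℝ) ^ k) ^ 2 := by
        gcongr with i
        exact abs_sub_lt_of_dyadicIndex_eq hxy i
    _ = n * ((2⁻¹ : ℝ) ^ k) ^ 2 := by simp
    _ ≤ (n : ℝ) ^ 2 * ((2⁻¹ : ℝ) ^ k) ^ 2 := by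
        gcongr
        exact_mod_cast Nat.le_self_pow two_ne_zero n
    _ = _ := by ring

/-- A set of zero dyadic content has zero Hausdorff measure. -/
lemma hausdorffMeasure_eq_zero_of_netContent {s : ℝ} (hs : 0 < s)
    {A : Set (EuclideanSpace ℝ (Fin n))}
    (hA : netContent dyadicIndex (dyadicWeight s) A = 0) : μH[s] A = 0 := by
  set m : Set (EuclideanSpace ℝ (Fin n)) → ℝ≥0∞ := fun S =>
    ⨅ (k : ℕ) (i : Fin n → ℤ) (_ : S ⊆ dyadicIndex k ⁻¹' {i}), dyadicWeight s k with hm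
  set C : ℝ≥0∞ := ((n : ℝ≥0∞) + 1) ^ s with hC
  have hC0 : C ≠ 0 := (ENNReal.rpow_pos (by simp) (by simp)).ne'
  have hCt : C ≠ ∞ := ENNReal.rpow_ne_top_of_nonneg hs.le (by simp)
  have hdiam : ∀ S, ediam S ^ s ≤ C * m S := by
    intro S
    simp only [hm]
    simp_rw [ENNReal.mul_iInf_of_ne hC0 hCt]
    refine le_iInf fun k => le_iInf fun v => le_iInf fun hS => ?_
    rw [hC, dyadicWeight, ← ENNReal.mul_rpow_of_nonneg _ _ hs.le]
    refine ENNReal.rpow_le_rpow ((ediam_dyadic_le k v hS).trans ?_) hs.le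
    gcongr
    exact le_self_add
  rw [Measure.hausdorffMeasure_apply]
  refine le_antisymm (iSup₂_le fun r hr => ?_) zero_le
  refine le_of_forall_gt fun ε hε => ?_
  have hδ : 0 < min ε (r ^ s) / C :=
    ENNReal.div_pos (lt_min hε (ENNReal.rpow_pos_of_nonneg hr hs.le)).ne' hCt
  rw [netContent, OuterMeasure.boundedBy_apply] at hA
  rw [← hA, iInf_lt_iff] at hδ
  obtain ⟨t, hδ⟩ := hδ
  obtain ⟨ht, hsum⟩ := iInf_lt_iff.1 hδ
  have hCsum : C * ∑' j, ⨆ _ : (t j).Nonempty, m (t j) < min ε (r ^ s) := by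
    rw [mul_comm]
    exact (ENNReal.lt_div_iff_mul_lt (Or.inl hC0) (Or.inl hCt)).1 hsum
  have hterm : ∀ j, (⨆ _ : (t j).Nonempty, ediam (t j) ^ s) ≤
      C * ⨆ _ : (t j).Nonempty, m (t j) := fun j =>
    iSup_le fun h => (hdiam _).trans (mul_le_mul_right (le_iSup (fun _ => m (t j)) h) C)
  have hsmall : ∀ j, ediam (t j) ≤ r := by
    intro j
    rcases (t j).eq_empty_or_nonempty with h | h
    · simp [h]
    · refine (ENNReal.rpow_le_rpow_iff hs).1 ?_
      calc ediam (t j) ^ s ≤ C * ⨆ _ : (t j).Nonempty, m (t j) :=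
            le_trans (le_iSup (fun _ : (t j).Nonempty => ediam (t j) ^ s) h) (hterm j)
        _ ≤ C * ∑' j, ⨆ _ : (t j).Nonempty, m (t j) := by gcongr; exact ENNReal.le_tsum j
        _ ≤ r ^ s := (hCsum.trans_le (min_le_right _ _)).le
  calc (⨅ (t : ℕ → Set (EuclideanSpace ℝ (Fin n))) (_ : A ⊆ ⋃ j, t j)
        (_ : ∀ j, ediam (t j) ≤ r), ∑' j, ⨆ _ : (t j).Nonempty, ediam (t j) ^ s)
      ≤ ∑' j, ⨆ _ : (t j).Nonempty, ediam (t j) ^ s :=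
        iInf_le_of_le t (iInf_le_of_le ht (iInf_le_of_le hsmall le_rfl))
    _ ≤ ∑' j, C * ⨆ _ : (t j).Nonempty, m (t j) := ENNReal.tsum_le_tsum hterm
    _ = C * ∑' j, ⨆ _ : (t j).Nonempty, m (t j) := ENNReal.tsum_mul_left
    _ < ε := hCsum.trans_le (min_le_left _ _)

lemma ball_subset_biUnion_dyadic (k : ℕ) (x : EuclideanSpace ℝ (Fin n)) :
    ball x (2⁻¹ ^ k) ⊆ ⋃ v ∈ Finset.Icc (fun i => dyadicIndex k x i - 1)
      (fun i => dyadicIndex k x i + 1), dyadicIndex k ⁻¹' {v} := by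
  intro y hy
  have key : ∀ i, |2 ^ k * y i - 2 ^ k * x i| < 1 := by
    intro i
    have h1 : |y i - x i| < 2⁻¹ ^ k := (PiLp.norm_apply_le (y - x) i).trans_lt
      (mem_ball_iff_norm.1 hy)
    rw [← mul_sub, abs_mul, abs_of_pos (by positivity)]
    rwa [inv_pow, ← one_div, lt_div_iff₀ (by positivity), mul_comm] at h1
  simp only [mem_iUnion, exists_prop, mem_preimage, mem_singleton_iff, exists_eq_right',
    Finset.mem_Icc, Pi.le_def]
  refine ⟨fun i => ?_, fun i => ?_⟩ <;>
    have h := abs_lt.1 (key i)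
  · rw [sub_le_iff_le_add, ← Int.lt_add_one_iff]
    simp only [dyadicIndex]
    rw [Int.floor_lt]
    push_cast
    linarith [Int.lt_floor_add_one ((2 : ℝ) ^ k * y i)]
  · rw [← Int.lt_add_one_iff]
    simp only [dyadicIndex]
    rw [Int.floor_lt]
    push_cast
    linarith [Int.lt_floor_add_one ((2 : ℝ) ^ k * x i)]

/-- **Frostman's lemma** for Borel sets. -/
lemma exists_frostman_measure {s : ℝ} (hs : 0 < s) {A : Set (EuclideanSpace ℝ (Fin n))}
    (hA : MeasurableSet A) (hA0 : μH[s] A ≠ 0) :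
    ∃ (μ : Measure (EuclideanSpace ℝ (Fin n))) (K : Set (EuclideanSpace ℝ (Fin n))) (C : ℝ≥0∞),
      IsProbabilityMeasure μ ∧ K ⊆ A ∧ IsCompact K ∧ μ Kᶜ = 0 ∧ C ≠ ∞ ∧
      ∀ x k, μ (ball x (2⁻¹ ^ k)) ≤ C * dyadicWeight s k := by
  set M := netContent (X := EuclideanSpace ℝ (Fin n)) dyadicIndex (dyadicWeight s) with hMdef
  have hqm : ∀ k (v : Fin n → ℤ), MeasurableSet
      ((dyadicIndex k : EuclideanSpace ℝ (Fin n) → Fin n → ℤ) ⁻¹' {v}) :=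
    fun k v => measurable_dyadicIndex k (measurableSet_singleton v)
  obtain ⟨v, hv⟩ : ∃ v, M (A ∩ dyadicIndex 0 ⁻¹' {v}) ≠ 0 := by
    by_contra! h
    refine hA0 (hausdorffMeasure_eq_zero_of_netContent hs ?_)
    refine measure_mono_null (fun x hx => ?_) (measure_iUnion_null h)
    exact mem_iUnion.2 ⟨dyadicIndex 0 x, hx, rfl⟩
  have han := (hA.inter (hqm 0 v)).analyticSet
  rw [AnalyticSet] at han
  rcases han with hemp | ⟨f, hf, hrange⟩
  · simp [hemp] at hv
  obtain ⟨c, hc0, hc⟩ := exists_between (pos_iff_ne_zero.2 hv)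
  rw [← hrange] at hc
  have hcell : range f ⊆ dyadicIndex 0 ⁻¹' {v} := hrange ▸ inter_subset_right
  obtain ⟨K, hKf, hK, E, hEf, hEc, hEU⟩ := exists_compact_forall_lt_of_analytic hf (M := M)
    (fun E hE hEr => netContent_iUnion_le dyadicIndex_parent (dyadicWeight_antitone hs.le)
      (dyadicWeight_ne_top hs.le 0) hE
      fun n => (subset_iUnion E n).trans (hEr.trans hcell)) hc
  have hct : c ≠ ∞ := hc.ne_top
  choose μ hμE hμc hμw using fun k => exists_measure_le_weight dyadicIndex_parent hqm
    finite_dyadic_children (dyadicWeight_ne_top hs.le) k 0 v (E k) ((hEf k).trans hcell) c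
    (hEc k).le
  have hprob : ∀ k, IsProbabilityMeasure (c⁻¹ • μ k) := fun k =>
    ⟨by simp [hμc, ENNReal.inv_mul_cancel hc0.ne' hct]⟩
  let P : ℕ → ProbabilityMeasure (EuclideanSpace ℝ (Fin n)) := fun k => ⟨c⁻¹ • μ k, hprob k⟩
  have hcompact : IsCompact (closure (range f)) := by
    refine Metric.isCompact_of_isClosed_isBounded isClosed_closure
      (Bornology.IsBounded.closure ?_)
    refine Metric.isBounded_iff_ediam_ne_top.2 ((ediam_dyadic_le 0 v hcell).trans_lt ?_).ne
    simp
  have hPc := isCompact_setOfPred_probabilityMeasure_mass_eq_compl_isCompact_le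
    (E := EuclideanSpace ℝ (Fin n)) (u := fun _ => 0) (K := fun _ => closure (range f))
    tendsto_const_nhds (fun _ => hcompact) (Or.inr monotone_const)
  have hPmem : ∀ k, P k ∈ {μ : ProbabilityMeasure (EuclideanSpace ℝ (Fin n)) |
      ∀ _ : ℕ, μ (closure (range f))ᶜ ≤ 0} := by
    intro k _
    have : (P k : Measure (EuclideanSpace ℝ (Fin n))) (closure (range f))ᶜ = 0 := by
      change (c⁻¹ • μ k) _ = 0
      rw [Measure.smul_apply, measure_mono_null _ (hμE k), smul_zero]
      exact compl_subset_compl.2 ((hEf k).trans subset_closure)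
    exact (ENNReal.toNNReal_eq_zero_iff _).2 (Or.inl this) |>.le
  let 𝒰 : Ultrafilter ℕ := Ultrafilter.of atTop
  obtain ⟨Q, -, hQ⟩ := hPc.ultrafilter_le_nhds (𝒰.map P)
    (by rw [le_principal_iff]; exact Filter.mem_map.2 (univ_mem' hPmem))
  have hQ' : Tendsto P 𝒰 (𝓝 Q) := hQ
  have hev : ∀ {p : ℕ → Prop}, (∀ᶠ k in atTop, p k) → ∀ᶠ k in (𝒰 : Filter ℕ), p k :=
    fun h => Ultrafilter.of_le atTop h
  have hopen : ∀ {G : Set (EuclideanSpace ℝ (Fin n))} {b : ℝ≥0∞}, IsOpen G →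
      (∀ᶠ k in atTop, c⁻¹ * μ k G ≤ b) → (Q : Measure (EuclideanSpace ℝ (Fin n))) G ≤ b := by
    intro G b hG h
    refine (ProbabilityMeasure.le_liminf_measure_open_of_tendsto hQ' hG).trans ?_
    exact liminf_le_of_frequently_le' (hev h).frequently
  refine ⟨Q, K, c⁻¹ * 3 ^ n, inferInstance, (hKf.trans hrange.le).trans inter_subset_left, hK, ?_,
    by finiteness [hc0.ne'], fun x k => ?_⟩
  · have hcover : Kᶜ ⊆ ⋃ m : ℕ, (cthickening (1 / ((m : ℝ) + 1)) K)ᶜ := by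
      intro x hx
      by_contra hxc
      simp only [mem_iUnion, mem_compl_iff, not_exists, not_not] at hxc
      refine hx ?_
      rw [← hK.isClosed.closure_eq, closure_eq_iInter_cthickening' K
        (range fun m : ℕ => 1 / ((m : ℝ) + 1))]
      · simpa using hxc
      · intro ε hε
        obtain ⟨m, hm⟩ := exists_nat_one_div_lt hε
        exact ⟨_, ⟨m, rfl⟩, by positivity, hm.le⟩
    refine measure_mono_null hcover (measure_iUnion_null fun m => ?_)
    refine le_antisymm (hopen isClosed_cthickening.isOpen_compl ?_) zero_le
    filter_upwards [hEU _ (isOpen_thickening (δ := 1 / ((m : ℝ) + 1)) (E := K))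
      (self_subset_thickening (by positivity) K)] with k hk
    rw [measure_mono_null _ (hμE k), mul_zero]
    exact compl_subset_compl.2 (hk.trans (thickening_subset_cthickening _ _))
  · refine hopen isOpen_ball ?_
    filter_upwards [eventually_ge_atTop k] with l hl
    rw [mul_assoc]
    gcongr
    refine (measure_mono (ball_subset_biUnion_dyadic k x)).trans
      ((measure_biUnion_finset_le _ _).trans ?_)
    refine (Finset.sum_le_card_nsmul _ _ (dyadicWeight s k) fun v _ => ?_).trans ?_
    · simpa using hμw l k hl v
    · rw [Pi.card_Icc, nsmul_eq_mul]
      gcongr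
      have : ∀ i, (Finset.Icc (dyadicIndex k x i - 1) (dyadicIndex k x i + 1)).card = 3 := by
        intro i
        rw [Int.card_Icc]
        lia
      simp [this]

end Frostman

section FourierDensity

open Filter Topology FourierTransform
open scoped ContDiff

lemma integral_fourier_eq_integral_mul_charFun (α : Measure ℝ) [IsFiniteMeasure α] {k : ℝ → ℂ}
    (hk : Integrable k) :
    ∫ t, 𝓕 k t ∂α = ∫ r, k r * charFun α (-(2 * Real.pi * r)) := by
  have h := VectorFourier.integral_fourierIntegral_smul_eq_flip (μ := volume) (ν := α)
    (L := innerₗ ℝ) (f := k) (g := (1 : ℝ → ℂ)) Real.continuous_fourierChar continuous_inner hk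
    (integrable_const 1)
  have h2 : ∀ r : ℝ, charFun α (-(2 * Real.pi * r)) =
      VectorFourier.fourierIntegral Real.fourierChar α (innerₗ ℝ).flip 1 r := by
    intro r
    rw [charFun_eq_fourierIntegral', flip_innerₗ]
    congr 1
    rw [smul_eq_mul]
    field_simp
  simp_rw [h2]
  simpa [Real.fourier_eq, VectorFourier.fourierIntegral] using h

lemma integral_eq_integral_mul_fourier_charFun (α : Measure ℝ) [IsFiniteMeasure α]
    (hα : Integrable (fun r : ℝ => charFun α (2 * Real.pi * r)))
    {g : ℝ → ℝ} (hg : ContDiff ℝ ∞ g) (hgc : HasCompactSupport g) :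
    ∫ t, (g t : ℂ) ∂α = ∫ t, g t • 𝓕 (fun r : ℝ => charFun α (2 * Real.pi * r)) t := by
  have hc : HasCompactSupport (fun t => (g t : ℂ)) := hgc.comp_left Complex.ofReal_zero
  have hd : ContDiff ℝ ∞ (fun t => (g t : ℂ)) := Complex.ofRealCLM.contDiff.comp hg
  set S : SchwartzMap ℝ ℂ := hc.toSchwartzMap hd with hS
  have hSg : ∀ t, S t = (g t : ℂ) := fun t => rfl
  set T : SchwartzMap ℝ ℂ := 𝓕⁻ S with hT
  have h1 : ∀ t, 𝓕 (⇑T) t = (g t : ℂ) := by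
    intro t
    rw [← SchwartzMap.fourier_coe, hT, FourierTransform.fourier_fourierInv_eq, hSg]
  calc ∫ t, (g t : ℂ) ∂α = ∫ t, 𝓕 (⇑T) t ∂α := by simp_rw [h1]
    _ = ∫ r, T r * charFun α (-(2 * Real.pi * r)) :=
        integral_fourier_eq_integral_mul_charFun α T.integrable
    _ = ∫ r, T (-r) * charFun α (2 * Real.pi * r) := by
        rw [← integral_neg_eq_self]; simp
    _ = ∫ r, 𝓕 (⇑S) r • charFun α (2 * Real.pi * r) := by
        simp [hT, SchwartzMap.fourierInv_coe, Real.fourierInv_eq_fourier_neg]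
    _ = ∫ t, S t • 𝓕 (fun r : ℝ => charFun α (2 * Real.pi * r)) t := by
        have h := VectorFourier.integral_fourierIntegral_smul_eq_flip (μ := volume)
          (ν := volume) (L := innerₗ ℝ) (f := S)
          (g := fun r : ℝ => charFun α (2 * Real.pi * r))
          Real.continuous_fourierChar continuous_inner S.integrable hα
        rw [flip_innerₗ] at h
        exact h
    _ = _ := by simp [hSg]

lemma continuous_fourier_of_integrable {k : ℝ → ℂ} (hk : Integrable k) : Continuous (𝓕 k) :=
  VectorFourier.fourierIntegral_continuous Real.continuous_fourierChar continuous_inner hk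

lemma fourier_charFun_eq_zero_of_measure_eq_zero (α : Measure ℝ) [IsFiniteMeasure α]
    (hα : Integrable (fun r : ℝ => charFun α (2 * Real.pi * r)))
    {U : Set ℝ} (hU : IsOpen U) (hαU : α U = 0) {t : ℝ} (ht : t ∈ U) :
    𝓕 (fun r : ℝ => charFun α (2 * Real.pi * r)) t = 0 := by
  have hcont := continuous_fourier_of_integrable hα
  have h := hU.ae_eq_zero_of_integral_contDiff_smul_eq_zero (μ := volume)
    (hcont.locallyIntegrable.locallyIntegrableOn U) (by
      intro g hg hgc hgU
      rw [← integral_eq_integral_mul_fourier_charFun α hα hg hgc]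
      refine integral_eq_zero_of_ae ?_
      have : ∀ᵐ x ∂α, x ∉ U := measure_eq_zero_iff_ae_notMem.1 hαU
      filter_upwards [this] with x hx
      have : g x = 0 := image_eq_zero_of_notMem_tsupport fun h' => hx (hgU h')
      simp [this])
  by_contra hne
  have hopen : IsOpen (U ∩ {t | 𝓕 (fun r : ℝ => charFun α (2 * Real.pi * r)) t ≠ 0}) :=
    hU.inter (isOpen_ne_fun hcont continuous_const)
  have hpos := hopen.measure_pos volume ⟨t, ht, hne⟩
  refine hpos.ne' (measure_eq_zero_iff_ae_notMem.2 ?_)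
  filter_upwards [h] with x hx hx'
  exact hx'.2 (hx hx'.1)

lemma measure_eq_zero_of_fourier_charFun_eq_zero (α : Measure ℝ) [IsFiniteMeasure α]
    (hα : Integrable (fun r : ℝ => charFun α (2 * Real.pi * r)))
    {U : Set ℝ} (hU : IsOpen U)
    (hαU : ∀ t ∈ U, 𝓕 (fun r : ℝ => charFun α (2 * Real.pi * r)) t = 0) :
    α U = 0 := by
  refine measure_null_of_locally_null U fun x hx => ?_
  obtain ⟨g, hgU, hgc, hg, hg01, hgx⟩ :=
    exists_contDiff_tsupport_subset (n := ⊤) (hU.mem_nhds hx)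
  refine ⟨{t | 0 < g t}, mem_nhdsWithin_of_mem_nhds
    ((isOpen_lt continuous_const hg.continuous).mem_nhds (by simp [hgx])), ?_⟩
  have h := integral_eq_integral_mul_fourier_charFun α hα hg hgc
  have h0 : ∫ t, g t • 𝓕 (fun r : ℝ => charFun α (2 * Real.pi * r)) t = 0 := by
    refine integral_eq_zero_of_ae (Eventually.of_forall fun t => ?_)
    by_cases ht : t ∈ U
    · simp [hαU t ht]
    · have : g t = 0 := image_eq_zero_of_notMem_tsupport fun h' => ht (hgU h')
      simp [this]
  rw [h0, integral_complex_ofReal, Complex.ofReal_eq_zero] at h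
  have hnn : 0 ≤ g := fun t => (hg01 ⟨t, rfl⟩).1
  rw [integral_eq_zero_iff_of_nonneg hnn
    (hg.continuous.integrable_of_hasCompactSupport hgc)] at h
  refine measure_eq_zero_iff_ae_notMem.2 ?_
  filter_upwards [h] with t ht ht'
  exact ht'.ne' ht

/-- Two finite measures with integrable characteristic functions and non-zero correlation have
supports whose intersection has non-empty interior. -/
lemma interior_inter_nonempty_of_integral_charFun_ne_zero (α β : Measure ℝ)
    [IsFiniteMeasure α] [IsFiniteMeasure β]
    (hα : Integrable (fun r : ℝ => charFun α (2 * Real.pi * r)))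
    (hβ : Integrable (fun r : ℝ => charFun β (2 * Real.pi * r)))
    {F G : Set ℝ} (hF : IsClosed F) (hG : IsClosed G) (hαF : α Fᶜ = 0) (hβG : β Gᶜ = 0)
    (hne : ∫ r : ℝ, charFun α (2 * Real.pi * r) * charFun β (-(2 * Real.pi * r)) ≠ 0) :
    (interior (F ∩ G)).Nonempty := by
  set f := 𝓕 (fun r : ℝ => charFun α (2 * Real.pi * r)) with hf
  set g := 𝓕 (fun r : ℝ => charFun β (2 * Real.pi * r)) with hg
  have hfo : IsOpen {t | f t ≠ 0} :=
    isOpen_ne_fun (continuous_fourier_of_integrable hα) continuous_const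
  have hgo : IsOpen {t | g t ≠ 0} :=
    isOpen_ne_fun (continuous_fourier_of_integrable hβ) continuous_const
  have hsub : {t | f t ≠ 0} ∩ {t | g t ≠ 0} ⊆ F ∩ G := by
    rintro t ⟨hft, hgt⟩
    constructor
    · by_contra h
      exact hft (fourier_charFun_eq_zero_of_measure_eq_zero α hα hF.isOpen_compl hαF h)
    · by_contra h
      exact hgt (fourier_charFun_eq_zero_of_measure_eq_zero β hβ hG.isOpen_compl hβG h)
  have hnonempty : ({t | f t ≠ 0} ∩ {t | g t ≠ 0}).Nonempty := by
    by_contra hemp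
    rw [Set.not_nonempty_iff_eq_empty] at hemp
    have hβU : β {t | f t ≠ 0} = 0 := by
      refine measure_eq_zero_of_fourier_charFun_eq_zero β hβ hfo fun t ht => ?_
      by_contra hgt
      exact (hemp ▸ (⟨ht, hgt⟩ : t ∈ {t | f t ≠ 0} ∩ {t | g t ≠ 0}) : t ∈ (∅ : Set ℝ))
    refine hne ?_
    rw [← integral_fourier_eq_integral_mul_charFun β hα]
    refine integral_eq_zero_of_ae ?_
    filter_upwards [measure_eq_zero_iff_ae_notMem.1 hβU] with t ht
    simpa using ht
  exact hnonempty.mono (interior_maximal hsub (hfo.inter hgo))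

end FourierDensity

section Energy

variable {E : Type*} [NormedAddCommGroup E]

/-- The regularized Riesz kernel of exponent `σ`. -/
noncomputable def rieszKernel (σ : ℝ) (z : E) : ℝ≥0∞ := (ENNReal.ofReal (min 1 ‖z‖)) ^ (-σ)

lemma rieszKernel_le {σ : ℝ} (hσ : 0 < σ) (z : E) :
    rieszKernel σ z ≤ dyadicWeight (-σ) 1 +
      ∑' j, (ball (0 : E) (2⁻¹ ^ j)).indicator (fun _ => dyadicWeight (-σ) (j + 2)) z := by
  have hmono : ∀ {k : ℕ} {x : ℝ}, (2⁻¹ : ℝ) ^ k ≤ x →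
      (ENNReal.ofReal x) ^ (-σ) ≤ dyadicWeight (-σ) k := by
    intro k x hx
    rw [dyadicWeight, ENNReal.rpow_neg, ENNReal.rpow_neg, ENNReal.inv_le_inv]
    refine ENNReal.rpow_le_rpow ?_ hσ.le
    refine le_trans (le_of_eq ?_) (ENNReal.ofReal_le_ofReal hx)
    rw [ENNReal.ofReal_pow (by norm_num), ENNReal.ofReal_inv_of_pos (by norm_num)]
    simp
  have hone : ∀ j, (1 : ℝ≥0∞) ≤ dyadicWeight (-σ) (j + 2) := by
    intro j
    rw [dyadicWeight, ENNReal.rpow_neg, ENNReal.one_le_inv]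
    refine ENNReal.rpow_le_one (pow_le_one' ?_ _) hσ.le
    simp
  rcases eq_or_ne z 0 with rfl | hz
  · have : ∑' j, (ball (0 : E) (2⁻¹ ^ j)).indicator (fun _ => dyadicWeight (-σ) (j + 2)) (0 : E)
        = ∞ := by
      refine top_unique ?_
      rw [← ENNReal.tsum_const_eq_top_of_ne_zero (α := ℕ) (one_ne_zero)]
      refine ENNReal.tsum_le_tsum fun j => ?_
      rw [Set.indicator_of_mem (mem_ball_self (by positivity))]
      exact hone j
    rw [this, add_top]
    exact le_top
  · have hz' : 0 < ‖z‖ := norm_pos_iff.2 hz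
    obtain ⟨k, hk1, hk2⟩ := exists_nat_pow_near_of_lt_one (x := min 1 ‖z‖) (y := (2⁻¹ : ℝ))
      (by positivity) (min_le_left _ _) (by norm_num) (by norm_num)
    cases k with
    | zero => exact (hmono hk1.le).trans le_self_add
    | succ j =>
      have hlt : (2⁻¹ : ℝ) ^ (j + 1) < 2⁻¹ ^ j := by
        rw [pow_succ]
        have : (0 : ℝ) < 2⁻¹ ^ j := by positivity
        linarith
      have hmem : z ∈ ball (0 : E) (2⁻¹ ^ j) := by
        rw [mem_ball_zero_iff]
        have h1 : (2⁻¹ : ℝ) ^ j ≤ 1 := pow_le_one₀ (by norm_num) (by norm_num)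
        rcases min_le_iff.1 hk2 with h | h
        · linarith
        · linarith
      calc rieszKernel σ z ≤ dyadicWeight (-σ) (j + 2) := hmono hk1.le
        _ = (ball (0 : E) (2⁻¹ ^ j)).indicator (fun _ => dyadicWeight (-σ) (j + 2)) z := by
            rw [Set.indicator_of_mem hmem]
        _ ≤ ∑' j, (ball (0 : E) (2⁻¹ ^ j)).indicator (fun _ => dyadicWeight (-σ) (j + 2)) z :=
            ENNReal.le_tsum j
        _ ≤ _ := le_add_self

lemma dyadicWeight_add_two_mul {s σ : ℝ} (j : ℕ) :
    dyadicWeight (-σ) (j + 2) * dyadicWeight s j =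
      dyadicWeight (-σ) 2 * ((2 : ℝ≥0∞)⁻¹ ^ (s - σ)) ^ j := by
  have h0 : (2 : ℝ≥0∞)⁻¹ ≠ 0 := by simp
  have ht : (2 : ℝ≥0∞)⁻¹ ≠ ∞ := by simp
  simp only [dyadicWeight, ← ENNReal.rpow_natCast, ← ENNReal.rpow_mul]
  rw [← ENNReal.rpow_add _ _ h0 ht, ← ENNReal.rpow_add _ _ h0 ht]
  congr 1
  push_cast
  ring

lemma lintegral_rieszKernel_lt_top [MeasurableSpace E] [BorelSpace E]
    (ρ : Measure E) [IsFiniteMeasure ρ] {s σ : ℝ} (hσ : 0 < σ) (hσs : σ < s) {C : ℝ≥0∞} (hC : C ≠ ∞)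
    (hρ : ∀ k, ρ (ball 0 (2⁻¹ ^ k)) ≤ C * dyadicWeight s k) :
    ∫⁻ z, rieszKernel σ z ∂ρ < ∞ := by
  have hfin : ∀ k, dyadicWeight (-σ) k ≠ ∞ := by
    intro k
    rw [dyadicWeight]
    refine ENNReal.rpow_ne_top_of_ne_zero (by simp) ?_
    exact ENNReal.pow_ne_top (by simp)
  have hq : (2 : ℝ≥0∞)⁻¹ ^ (s - σ) < 1 := ENNReal.rpow_lt_one (by simp) (by linarith)
  calc ∫⁻ z, rieszKernel σ z ∂ρ
      ≤ ∫⁻ z, (dyadicWeight (-σ) 1 + ∑' j, (ball (0 : E) (2⁻¹ ^ j)).indicator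
          (fun _ => dyadicWeight (-σ) (j + 2)) z) ∂ρ := lintegral_mono (rieszKernel_le hσ)
    _ = dyadicWeight (-σ) 1 * ρ univ +
          ∑' j, dyadicWeight (-σ) (j + 2) * ρ (ball 0 (2⁻¹ ^ j)) := by
        rw [lintegral_add_left measurable_const, lintegral_const, lintegral_tsum]
        · simp_rw [lintegral_indicator_const measurableSet_ball]
        · intro j
          exact (measurable_const.indicator measurableSet_ball).aemeasurable
    _ ≤ dyadicWeight (-σ) 1 * ρ univ +
          ∑' j, (C * dyadicWeight (-σ) 2) * ((2 : ℝ≥0∞)⁻¹ ^ (s - σ)) ^ j := by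
        refine add_le_add le_rfl (ENNReal.tsum_le_tsum fun j => ?_)
        calc dyadicWeight (-σ) (j + 2) * ρ (ball 0 (2⁻¹ ^ j))
            ≤ dyadicWeight (-σ) (j + 2) * (C * dyadicWeight s j) := by gcongr; exact hρ j
          _ = C * (dyadicWeight (-σ) (j + 2) * dyadicWeight s j) := by ring
          _ = _ := by rw [dyadicWeight_add_two_mul, mul_assoc]
    _ < ∞ := by
        rw [ENNReal.tsum_mul_left, ENNReal.tsum_geometric]
        refine ENNReal.add_lt_top.2 ⟨ENNReal.mul_lt_top (hfin 1).lt_top (measure_lt_top _ _), ?_⟩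
        refine ENNReal.mul_lt_top (ENNReal.mul_lt_top hC.lt_top (hfin 2).lt_top) ?_
        rw [ENNReal.inv_lt_top]
        exact tsub_pos_of_lt hq

lemma ofReal_exp_neg_le_rieszKernel {σ : ℝ} (hσ : 0 < σ) (r : ℝ) (z : E) :
    ENNReal.ofReal (Real.exp (-(Real.pi * r ^ 2 * ‖z‖ ^ 2))) ≤
      ENNReal.ofReal (Real.exp (σ ^ 2 / (4 * Real.pi)) * (1 + ‖r‖) ^ (-σ)) * rieszKernel σ z := by
  have hc : 0 < Real.exp (σ ^ 2 / (4 * Real.pi)) * (1 + ‖r‖) ^ (-σ) := by positivity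
  rcases eq_or_ne z 0 with rfl | hz
  · have : rieszKernel σ (0 : E) = ∞ := by
      simp [rieszKernel, ENNReal.zero_rpow_of_neg (show -σ < 0 by linarith)]
    rw [this, ENNReal.mul_top (by simpa using hc)]
    exact le_top
  · have hz' : 0 < ‖z‖ := norm_pos_iff.2 hz
    have hm : 0 < min 1 ‖z‖ := by positivity
    rw [rieszKernel, ENNReal.ofReal_rpow_of_pos hm, ← ENNReal.ofReal_mul hc.le]
    refine ENNReal.ofReal_le_ofReal ?_
    have h1 : (1 + ‖r‖) * min 1 ‖z‖ ≤ Real.exp (‖r‖ * ‖z‖) := by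
      refine le_trans ?_ (Real.add_one_le_exp _)
      have := mul_le_mul_of_nonneg_left (min_le_right 1 ‖z‖) (norm_nonneg r)
      have := min_le_left 1 ‖z‖
      linarith
    have h2 : ((1 + ‖r‖) * min 1 ‖z‖) ^ σ ≤
        Real.exp (σ ^ 2 / (4 * Real.pi) + Real.pi * r ^ 2 * ‖z‖ ^ 2) := by
      calc ((1 + ‖r‖) * min 1 ‖z‖) ^ σ ≤ Real.exp (‖r‖ * ‖z‖) ^ σ := by gcongr
        _ = Real.exp (‖r‖ * ‖z‖ * σ) := by rw [← Real.exp_mul]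
        _ ≤ _ := by
          refine Real.exp_le_exp.2 ?_
          have hpi := Real.pi_pos
          have : σ ^ 2 / (4 * Real.pi) + Real.pi * r ^ 2 * ‖z‖ ^ 2 - ‖r‖ * ‖z‖ * σ =
              (σ - 2 * Real.pi * (‖r‖ * ‖z‖)) ^ 2 / (4 * Real.pi) := by
            rw [Real.norm_eq_abs]
            field_simp
            rw [← sq_abs r]
            ring
          have h3 : 0 ≤ (σ - 2 * Real.pi * (‖r‖ * ‖z‖)) ^ 2 / (4 * Real.pi) := by positivity
          linarith
    rw [Real.mul_rpow (by positivity) hm.le, Real.exp_add] at h2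
    rw [Real.exp_neg, Real.rpow_neg (by positivity), Real.rpow_neg hm.le,
      mul_assoc (Real.exp _) ((1 + ‖r‖) ^ σ)⁻¹, ← mul_inv, ← div_eq_mul_inv,
      le_div_iff₀ (by positivity), inv_mul_le_iff₀ (by positivity)]
    linarith

end Energy

section GaussianAverage

variable {E : Type*} [NormedAddCommGroup E] [InnerProductSpace ℝ E] [FiniteDimensional ℝ E]
  [MeasurableSpace E] [BorelSpace E]

variable (E) in
/-- The Gaussian measure with density `exp (-π ‖w‖ ^ 2)`. -/
noncomputable def gaussianMeasure : Measure E :=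
  volume.withDensity fun w => ENNReal.ofReal (Real.exp (-(Real.pi * ‖w‖ ^ 2)))

lemma integrable_exp_neg_pi_mul_sq_norm :
    Integrable (fun w : E => Real.exp (-(Real.pi * ‖w‖ ^ 2))) := by
  have h := GaussianFourier.integrable_cexp_neg_mul_sq_norm_add (V := E) (b := Real.pi)
    (by simpa using Real.pi_pos) 0 0
  refine h.norm.congr (Filter.Eventually.of_forall fun w => ?_)
  simp only [Complex.norm_exp]
  simp [← Complex.ofReal_pow]

instance : IsFiniteMeasure (gaussianMeasure E) :=
  isFiniteMeasure_withDensity_ofReal integrable_exp_neg_pi_mul_sq_norm.2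

lemma charFun_gaussianMeasure (ξ : E) :
    charFun (gaussianMeasure E) ξ = (Real.exp (-(‖ξ‖ ^ 2 / (4 * Real.pi))) : ℂ) := by
  have h := GaussianFourier.integral_cexp_neg_mul_sq_norm_add (V := E) (b := Real.pi)
    (by simpa using Real.pi_pos) Complex.I ξ
  rw [charFun_apply, gaussianMeasure, integral_withDensity_eq_integral_toReal_smul (by fun_prop)
    (by simp)]
  have hpi : (Real.pi : ℂ) ≠ 0 := by exact_mod_cast Real.pi_ne_zero
  rw [div_self hpi, Complex.one_cpow, one_mul] at h
  convert h using 1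
  · refine integral_congr_ae (Filter.Eventually.of_forall fun w => ?_)
    simp only
    rw [ENNReal.toReal_ofReal (Real.exp_nonneg _), Complex.real_smul, Complex.ofReal_exp,
      ← Complex.exp_add, real_inner_comm]
    push_cast
    ring_nf
  · push_cast
    congr 1
    rw [Complex.I_sq]
    ring

lemma integral_charFun_smul_swap (ρ γ : Measure E) [IsFiniteMeasure ρ] [IsFiniteMeasure γ]
    (r : ℝ) : ∫ w, charFun ρ (r • w) ∂γ = ∫ z, charFun γ (r • z) ∂ρ := by
  simp_rw [charFun_apply]
  rw [integral_integral_swap]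
  · simp_rw [inner_smul_right, real_inner_comm]
  · refine Integrable.of_bound (C := 1) ?_ (Filter.Eventually.of_forall fun p => ?_)
    · exact (by fun_prop : Continuous fun p : E × E =>
        Complex.exp (⟪p.2, r • p.1⟫ * Complex.I)).aestronglyMeasurable
    · simp [Function.uncurry, Complex.norm_exp_ofReal_mul_I]

/-- The law of the difference of independent variables with laws `μ` and `ν`. -/
noncomputable def diffMeasure (μ ν : Measure E) : Measure E := (μ.prod ν).map fun p => p.1 - p.2

instance (μ ν : Measure E) [IsFiniteMeasure μ] [IsFiniteMeasure ν] :
    IsFiniteMeasure (diffMeasure μ ν) := by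
  unfold diffMeasure; infer_instance

lemma charFun_diffMeasure (μ ν : Measure E) [IsFiniteMeasure μ] [IsFiniteMeasure ν] (ξ : E) :
    charFun (diffMeasure μ ν) ξ = charFun μ ξ * charFun ν (-ξ) := by
  rw [charFun_apply, diffMeasure, integral_map (by fun_prop) (by fun_prop), charFun_apply,
    charFun_apply, ← integral_prod_mul]
  refine integral_congr_ae (Filter.Eventually.of_forall fun p => ?_)
  simp only
  rw [← Complex.exp_add, inner_sub_left, inner_neg_right]
  push_cast
  ring_nf

lemma diffMeasure_ball_le (μ ν : Measure E) [IsProbabilityMeasure ν] [IsFiniteMeasure μ] {r : ℝ}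
    {c : ℝ≥0∞} (h : ∀ x, μ (ball x r) ≤ c) : diffMeasure μ ν (ball 0 r) ≤ c := by
  rw [diffMeasure, Measure.map_apply (by fun_prop) measurableSet_ball,
    Measure.prod_apply_symm (measurableSet_ball.preimage (by fun_prop))]
  calc _ ≤ ∫⁻ _, c ∂ν := by
        refine lintegral_mono fun y => ?_
        refine le_trans (measure_mono fun x hx => ?_) (h y)
        simpa [dist_eq_norm] using hx
    _ = c := by simp

lemma integral_charFun_mul_charFun_neg (μ ν : Measure E) [IsFiniteMeasure μ] [IsFiniteMeasure ν]
    (r : ℝ) :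
    ∫ w, charFun μ ((2 * Real.pi * r) • w) * charFun ν (-((2 * Real.pi * r) • w))
      ∂(gaussianMeasure E) =
    ((∫ z, Real.exp (-(Real.pi * r ^ 2 * ‖z‖ ^ 2)) ∂(diffMeasure μ ν) : ℝ) : ℂ) := by
  simp_rw [← charFun_diffMeasure]
  rw [integral_charFun_smul_swap, ← integral_complex_ofReal]
  refine integral_congr_ae (Filter.Eventually.of_forall fun z => ?_)
  simp only
  rw [charFun_gaussianMeasure]
  congr 3
  rw [norm_smul, Real.norm_eq_abs, mul_pow, sq_abs]
  field_simp
  ring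

lemma integrable_exp_neg_sq_norm (ρ : Measure E) [IsFiniteMeasure ρ] (r : ℝ) :
    Integrable (fun z : E => Real.exp (-(Real.pi * r ^ 2 * ‖z‖ ^ 2))) ρ := by
  refine Integrable.of_bound (C := 1) (by fun_prop) (Filter.Eventually.of_forall fun z => ?_)
  rw [Real.norm_eq_abs, abs_of_pos (Real.exp_pos _)]
  refine Real.exp_le_one_iff.2 ?_
  have := Real.pi_pos
  have : 0 ≤ Real.pi * r ^ 2 * ‖z‖ ^ 2 := by positivity
  linarith

lemma lintegral_enorm_charFun_sq (μ : Measure E) [IsFiniteMeasure μ] (r : ℝ) :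
    ∫⁻ w, ‖charFun μ ((2 * Real.pi * r) • w)‖ₑ ^ 2 ∂(gaussianMeasure E) =
      ∫⁻ z, ENNReal.ofReal (Real.exp (-(Real.pi * r ^ 2 * ‖z‖ ^ 2))) ∂(diffMeasure μ μ) := by
  have hmeas : Measurable fun w : E => charFun μ ((2 * Real.pi * r) • w) :=
    measurable_charFun.comp (by fun_prop)
  have h_integrable : Integrable (fun w : E => ‖charFun μ ((2 * Real.pi * r) • w)‖ ^ 2)
      (gaussianMeasure E) := by
    refine Integrable.of_bound (C := (μ.real univ) ^ 2) (by fun_prop)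
      (Filter.Eventually.of_forall fun w => ?_)
    rw [Real.norm_eq_abs, abs_of_nonneg (by positivity)]
    gcongr
    exact norm_charFun_le _
  have h := integral_charFun_mul_charFun_neg μ μ r
  have h2 : ∀ w : E, charFun μ ((2 * Real.pi * r) • w) * charFun μ (-((2 * Real.pi * r) • w)) =
      ((‖charFun μ ((2 * Real.pi * r) • w)‖ ^ 2 : ℝ) : ℂ) := by
    intro w
    rw [charFun_neg, Complex.mul_conj, Complex.normSq_eq_norm_sq]
  simp_rw [h2] at h
  rw [integral_complex_ofReal, Complex.ofReal_inj] at h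
  rw [← ofReal_integral_eq_lintegral_ofReal (integrable_exp_neg_sq_norm _ r)
    (Filter.Eventually.of_forall fun z => (Real.exp_pos _).le), ← h,
    ofReal_integral_eq_lintegral_ofReal h_integrable
      (Filter.Eventually.of_forall fun w => by positivity)]
  refine lintegral_congr fun w => ?_
  rw [ENNReal.ofReal_pow (norm_nonneg _), ofReal_norm]

lemma integrable_charFun_prod (μ : Measure E) [IsProbabilityMeasure μ] {s : ℝ} (hs : 2 < s)
    {C : ℝ≥0∞} (hC : C ≠ ∞) (hμ : ∀ x k, μ (ball x (2⁻¹ ^ k)) ≤ C * dyadicWeight s k) :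
    Integrable (fun p : ℝ × E => charFun μ ((2 * Real.pi * p.1) • p.2))
      (volume.prod (gaussianMeasure E)) := by
  obtain ⟨σ, hσ2, hσs⟩ := exists_between hs
  have hmeas : Measurable fun p : ℝ × E => charFun μ ((2 * Real.pi * p.1) • p.2) :=
    measurable_charFun.comp (by fun_prop)
  refine ⟨hmeas.aestronglyMeasurable, ?_⟩
  rw [HasFiniteIntegral, lintegral_prod _ hmeas.enorm.aemeasurable]
  set I := ∫⁻ z, rieszKernel σ z ∂(diffMeasure μ μ) with hI
  have hIfin : I < ∞ := lintegral_rieszKernel_lt_top _ (by linarith) hσs hC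
    fun k => diffMeasure_ball_le μ μ fun x => hμ x k
  set D := Real.exp (σ ^ 2 / (4 * Real.pi)) with hD
  have hJ : ∀ r : ℝ, ∫⁻ w, ‖charFun μ ((2 * Real.pi * r) • w)‖ₑ ^ 2 ∂(gaussianMeasure E) ≤
      ENNReal.ofReal (D * (1 + ‖r‖) ^ (-σ)) * I := by
    intro r
    rw [lintegral_enorm_charFun_sq, hI, ← lintegral_const_mul' _ _ ENNReal.ofReal_ne_top]
    exact lintegral_mono fun z => ofReal_exp_neg_le_rieszKernel (by linarith) r z
  have hpt : ∀ (r : ℝ) (w : E), ‖charFun μ ((2 * Real.pi * r) • w)‖ₑ ≤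
      ENNReal.ofReal ((1 + ‖r‖) ^ (σ / 2)) * ‖charFun μ ((2 * Real.pi * r) • w)‖ₑ ^ 2 +
        ENNReal.ofReal ((1 + ‖r‖) ^ (-(σ / 2))) := by
    intro r w
    set x := ‖charFun μ ((2 * Real.pi * r) • w)‖ with hx
    rw [← ofReal_norm, ← hx, ← ENNReal.ofReal_pow (by positivity), ← ENNReal.ofReal_mul
      (by positivity), ← ENNReal.ofReal_add (by positivity) (by positivity)]
    refine ENNReal.ofReal_le_ofReal ?_
    rw [Real.rpow_neg (by positivity)]
    set c := (1 + ‖r‖) ^ (σ / 2) with hc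
    have hc0 : 0 < c := by positivity
    have hx0 : 0 ≤ x := norm_nonneg _
    rw [← sub_nonneg]
    have : c * x ^ 2 + c⁻¹ - x = c⁻¹ * ((c * x - 1) ^ 2 + c * x) := by
      field_simp
      ring
    rw [this]
    positivity
  have h_integrable : ∫⁻ r : ℝ, ENNReal.ofReal ((1 + ‖r‖) ^ (-(σ / 2))) < ∞ := by
    have := (integrable_one_add_norm (E := ℝ) (μ := volume) (r := σ / 2)
      (by simp; linarith)).lintegral_lt_top
    exact this
  set T := gaussianMeasure E univ with hT
  have hTfin : T < ∞ := measure_lt_top _ _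
  calc ∫⁻ r : ℝ, ∫⁻ w, ‖charFun μ ((2 * Real.pi * r) • w)‖ₑ ∂(gaussianMeasure E)
      ≤ ∫⁻ r : ℝ, (ENNReal.ofReal D * I + T) * ENNReal.ofReal ((1 + ‖r‖) ^ (-(σ / 2))) := by
        refine lintegral_mono fun r => ?_
        calc ∫⁻ w, ‖charFun μ ((2 * Real.pi * r) • w)‖ₑ ∂(gaussianMeasure E)
            ≤ ∫⁻ w, (ENNReal.ofReal ((1 + ‖r‖) ^ (σ / 2)) *
                ‖charFun μ ((2 * Real.pi * r) • w)‖ₑ ^ 2 +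
                ENNReal.ofReal ((1 + ‖r‖) ^ (-(σ / 2)))) ∂(gaussianMeasure E) :=
              lintegral_mono (hpt r)
          _ = ENNReal.ofReal ((1 + ‖r‖) ^ (σ / 2)) *
                ∫⁻ w, ‖charFun μ ((2 * Real.pi * r) • w)‖ₑ ^ 2 ∂(gaussianMeasure E) +
                ENNReal.ofReal ((1 + ‖r‖) ^ (-(σ / 2))) * T := by
              rw [lintegral_add_right _ measurable_const, lintegral_const,
                lintegral_const_mul' _ _ ENNReal.ofReal_ne_top]
          _ ≤ ENNReal.ofReal ((1 + ‖r‖) ^ (σ / 2)) *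
                (ENNReal.ofReal (D * (1 + ‖r‖) ^ (-σ)) * I) +
                ENNReal.ofReal ((1 + ‖r‖) ^ (-(σ / 2))) * T := by
              gcongr
              exact hJ r
          _ = _ := by
              have : ENNReal.ofReal ((1 + ‖r‖) ^ (σ / 2)) * ENNReal.ofReal
                  (D * (1 + ‖r‖) ^ (-σ)) = ENNReal.ofReal D *
                  ENNReal.ofReal ((1 + ‖r‖) ^ (-(σ / 2))) := by
                rw [← ENNReal.ofReal_mul (by positivity), ← ENNReal.ofReal_mul (by positivity)]
                congr 1
                rw [mul_left_comm, ← Real.rpow_add (by positivity)]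
                ring_nf
              rw [← mul_assoc, this]
              ring
    _ = (ENNReal.ofReal D * I + T) * ∫⁻ r : ℝ, ENNReal.ofReal ((1 + ‖r‖) ^ (-(σ / 2))) := by
        rw [lintegral_const_mul _ (by fun_prop)]
    _ < ∞ := by
        refine ENNReal.mul_lt_top (ENNReal.add_lt_top.2 ⟨?_, hTfin⟩) h_integrable
        exact ENNReal.mul_lt_top ENNReal.ofReal_lt_top hIfin

lemma charFun_map_inner (μ : Measure E) (w : E) (r : ℝ) :
    charFun (μ.map fun x => ⟪x, w⟫) r = charFun μ (r • w) := by
  rw [charFun_apply, integral_map (by fun_prop) (by fun_prop), charFun_apply]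
  simp [inner_smul_right]

/-- Projections of two compact sets carrying Frostman measures of exponent greater than two have
intersections with non-empty interior for a non-null set of (non-normalized) directions. -/
lemma volume_setOf_interior_inter_nonempty_ne_zero (μ ν : Measure E) [IsProbabilityMeasure μ]
    [IsProbabilityMeasure ν] {s t : ℝ} (hs : 2 < s) (ht : 2 < t) {C D : ℝ≥0∞} (hC : C ≠ ∞)
    (hD : D ≠ ∞) (hμ : ∀ x k, μ (ball x (2⁻¹ ^ k)) ≤ C * dyadicWeight s k)
    (hν : ∀ x k, ν (ball x (2⁻¹ ^ k)) ≤ D * dyadicWeight t k) {K L : Set E} (hK : IsCompact K)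
    (hL : IsCompact L) (hμK : μ Kᶜ = 0) (hνL : ν Lᶜ = 0) :
    volume {w : E | (interior ((fun x => ⟪x, w⟫) '' K ∩ (fun x => ⟪x, w⟫) '' L)).Nonempty} ≠ 0 := by
  have hiμ := integrable_charFun_prod μ hs hC hμ
  have hiν := integrable_charFun_prod ν ht hD hν
  have hmeas : Measurable fun p : ℝ × E => charFun ν (-((2 * Real.pi * p.1) • p.2)) :=
    measurable_charFun.comp (by fun_prop)
  have hprod : Integrable (fun p : ℝ × E => charFun μ ((2 * Real.pi * p.1) • p.2) *
      charFun ν (-((2 * Real.pi * p.1) • p.2))) (volume.prod (gaussianMeasure E)) :=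
    hiμ.mul_bdd (c := 1) hmeas.aestronglyMeasurable
      (Filter.Eventually.of_forall fun p => norm_charFun_le_one _)
  intro h0
  have h0' : gaussianMeasure E
      {w : E | (interior ((fun x => ⟪x, w⟫) '' K ∩ (fun x => ⟪x, w⟫) '' L)).Nonempty} = 0 :=
    withDensity_absolutelyContinuous _ _ h0
  have hzero : ∀ᵐ w ∂(gaussianMeasure E), ∫ r : ℝ, charFun μ ((2 * Real.pi * r) • w) *
      charFun ν (-((2 * Real.pi * r) • w)) = 0 := by
    filter_upwards [measure_eq_zero_iff_ae_notMem.1 h0', hiμ.prod_left_ae, hiν.prod_left_ae]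
      with w hw hw1 hw2
    by_contra hne
    have hsupp : ∀ (κ : Measure E) (M : Set E), IsCompact M → κ Mᶜ = 0 →
        IsClosed ((fun x => ⟪x, w⟫) '' M) ∧
          (κ.map fun x => ⟪x, w⟫) ((fun x => ⟪x, w⟫) '' M)ᶜ = 0 := by
      intro κ M hM hκ
      have hcl : IsClosed ((fun x => ⟪x, w⟫) '' M) := (hM.image (by fun_prop)).isClosed
      refine ⟨hcl, ?_⟩
      rw [Measure.map_apply (by fun_prop) hcl.measurableSet.compl]
      exact measure_mono_null (fun x hx hxM => hx ⟨x, hxM, rfl⟩) hκ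
    have hm : AEMeasurable (fun x : E => ⟪x, w⟫) μ := by fun_prop
    refine hw (interior_inter_nonempty_of_integral_charFun_ne_zero (μ.map fun x => ⟪x, w⟫)
      (ν.map fun x => ⟪x, w⟫) ?_ ?_ (hsupp μ K hK hμK).1 (hsupp ν L hL hνL).1
      (hsupp μ K hK hμK).2 (hsupp ν L hL hνL).2 ?_)
    · simpa only [charFun_map_inner] using hw1
    · simpa only [charFun_map_inner] using hw2
    · simpa only [charFun_map_inner, neg_smul] using hne
  have hswap := integral_integral_swap (f := fun (r : ℝ) (w : E) =>
    charFun μ ((2 * Real.pi * r) • w) * charFun ν (-((2 * Real.pi * r) • w))) hprod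
  rw [integral_congr_ae hzero, integral_zero] at hswap
  simp_rw [integral_charFun_mul_charFun_neg μ ν] at hswap
  rw [integral_complex_ofReal, Complex.ofReal_eq_zero] at hswap
  have hρ0 : diffMeasure μ ν ≠ 0 := by
    intro h
    have h1 : charFun (diffMeasure μ ν) 0 = 1 := by rw [charFun_diffMeasure]; simp
    rw [h] at h1
    simp at h1
  have hpos : ∀ r : ℝ, 0 < ∫ z, Real.exp (-(Real.pi * r ^ 2 * ‖z‖ ^ 2)) ∂(diffMeasure μ ν) := by
    intro r
    rw [integral_pos_iff_support_of_nonneg (fun z => (Real.exp_pos _).le)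
      (integrable_exp_neg_sq_norm _ r)]
    have : (Function.support fun z : E => Real.exp (-(Real.pi * r ^ 2 * ‖z‖ ^ 2))) = univ := by
      ext z; simp [(Real.exp_pos _).ne']
    rw [this]
    exact pos_iff_ne_zero.2 (Measure.measure_univ_ne_zero.2 hρ0)
  have hintr : Integrable fun r : ℝ =>
      ∫ z, Real.exp (-(Real.pi * r ^ 2 * ‖z‖ ^ 2)) ∂(diffMeasure μ ν) := by
    have h := hprod.integral_prod_left
    simp_rw [integral_charFun_mul_charFun_neg μ ν] at h
    exact h.re
  have : 0 < ∫ r : ℝ, ∫ z, Real.exp (-(Real.pi * r ^ 2 * ‖z‖ ^ 2)) ∂(diffMeasure μ ν) := by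
    rw [integral_pos_iff_support_of_nonneg (fun r => (hpos r).le) hintr]
    have : (Function.support fun r : ℝ =>
        ∫ z, Real.exp (-(Real.pi * r ^ 2 * ‖z‖ ^ 2)) ∂(diffMeasure μ ν)) = univ := by
      ext r; simp [(hpos r).ne']
    rw [this]
    simp
  exact this.ne' hswap

end GaussianAverage

section Cone

variable {m : ℕ}

/-- The central projection onto the hyperplane `{x | x 0 = 1}`, in affine coordinates. -/
noncomputable def gnomonic (e : EuclideanSpace ℝ (Fin (m + 1))) : Fin m → ℝ :=
  fun i => e i.succ / e 0

lemma lipschitzOnWith_gnomonic (k : ℕ) :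
    LipschitzOnWith (2 * (k + 1) ^ 2) (gnomonic (m := m))
      {e | ‖e‖ = 1 ∧ ((k : ℝ) + 1)⁻¹ ≤ |e 0|} := by
  refine LipschitzOnWith.of_dist_le_mul fun e he f hf => ?_
  rw [dist_pi_le_iff (by positivity)]
  intro i
  have hcoord : ∀ (z : EuclideanSpace ℝ (Fin (m + 1))) j, |z j| ≤ ‖z‖ := fun z j => by
    simpa using PiLp.norm_apply_le z j
  have hk : (0 : ℝ) < ((k : ℝ) + 1)⁻¹ := by positivity
  have he0 : 0 < |e 0| := hk.trans_le he.2
  have hf0 : 0 < |f 0| := hk.trans_le hf.2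
  have h1 : |e i.succ - f i.succ| ≤ dist e f := by
    simpa [dist_eq_norm] using hcoord (e - f) i.succ
  have h2 : |f 0 - e 0| ≤ dist e f := by
    simpa [dist_eq_norm, abs_sub_comm] using hcoord (e - f) 0
  have h3 := hcoord e i.succ
  have h4 := hcoord e 0
  rw [he.1] at h3 h4
  have hnum : |e i.succ * f 0 - e 0 * f i.succ| ≤ 2 * dist e f := by
    calc |e i.succ * f 0 - e 0 * f i.succ|
        = |e i.succ * (f 0 - e 0) + e 0 * (e i.succ - f i.succ)| := by ring_nf
      _ ≤ |e i.succ| * |f 0 - e 0| + |e 0| * |e i.succ - f i.succ| := by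
          rw [← abs_mul, ← abs_mul]; exact abs_add_le _ _
      _ ≤ 1 * dist e f + 1 * dist e f := by gcongr
      _ = _ := by ring
  rw [Real.dist_eq, gnomonic, gnomonic, div_sub_div _ _ (abs_pos.1 he0) (abs_pos.1 hf0), abs_div,
    abs_mul, div_le_iff₀ (by positivity)]
  have hden : 1 ≤ ((k : ℝ) + 1) ^ 2 * (|e 0| * |f 0|) := by
    have h5 : 1 ≤ ((k : ℝ) + 1) * |e 0| := by
      rw [← inv_le_iff_one_le_mul₀' (by positivity)]; exact he.2
    have h6 : 1 ≤ ((k : ℝ) + 1) * |f 0| := by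
      rw [← inv_le_iff_one_le_mul₀' (by positivity)]; exact hf.2
    calc (1 : ℝ) ≤ (((k : ℝ) + 1) * |e 0|) * (((k : ℝ) + 1) * |f 0|) :=
          one_le_mul_of_one_le_of_one_le h5 h6
      _ = _ := by ring
  refine hnum.trans ?_
  have hd : 0 ≤ 2 * dist e f := by positivity
  push_cast
  calc 2 * dist e f ≤ 2 * dist e f * (((k : ℝ) + 1) ^ 2 * (|e 0| * |f 0|)) :=
        le_mul_of_one_le_right hd hden
    _ = _ := by ring

lemma volume_affine_section_eq_zero {G : Set (EuclideanSpace ℝ (Fin (m + 1)))}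
    (hG : ∀ w ∈ G, ∀ c : ℝ, c ≠ 0 → c • w ∈ G)
    (h0 : μH[m] {e : EuclideanSpace ℝ (Fin (m + 1)) | ‖e‖ = 1 ∧ e ∈ G} = 0) :
    volume {v : Fin m → ℝ | WithLp.toLp 2 (Fin.cons 1 v : Fin (m + 1) → ℝ) ∈ G} = 0 := by
  have hsub : {v : Fin m → ℝ | WithLp.toLp 2 (Fin.cons 1 v : Fin (m + 1) → ℝ) ∈ G} ⊆
      ⋃ k : ℕ, gnomonic '' ({e | ‖e‖ = 1 ∧ ((k : ℝ) + 1)⁻¹ ≤ |e 0|} ∩ G) := by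
    intro v hv
    set x : EuclideanSpace ℝ (Fin (m + 1)) := WithLp.toLp 2 (Fin.cons 1 v : Fin (m + 1) → ℝ)
      with hx
    have hx0 : x 0 = 1 := rfl
    have hxne : x ≠ 0 := fun h => by simp [h] at hx0
    have hxn : 0 < ‖x‖ := norm_pos_iff.2 hxne
    obtain ⟨k, hk⟩ := exists_nat_ge ‖x‖
    refine mem_iUnion.2 ⟨k, ‖x‖⁻¹ • x, ⟨⟨?_, ?_⟩, hG x hv _ (by positivity)⟩, ?_⟩
    · rw [norm_smul, norm_inv, norm_norm, inv_mul_cancel₀ hxn.ne']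
    · have : |(‖x‖⁻¹ • x) 0| = ‖x‖⁻¹ := by
        rw [PiLp.smul_apply, hx0, smul_eq_mul, mul_one, abs_of_pos (by positivity)]
      rw [this]
      exact inv_anti₀ hxn (by linarith)
    · ext i
      have : x i.succ = v i := rfl
      simp only [gnomonic, PiLp.smul_apply, smul_eq_mul, hx0, this]
      field_simp
  refine measure_mono_null hsub (measure_iUnion_null fun k => ?_)
  rw [← hausdorffMeasure_pi_real, Fintype.card_fin]
  refine le_antisymm ?_ bot_le
  refine (((lipschitzOnWith_gnomonic k).mono inter_subset_left).hausdorffMeasure_image_le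
    (Nat.cast_nonneg m)).trans ?_
  have hle : {e : EuclideanSpace ℝ (Fin (m + 1)) | ‖e‖ = 1 ∧ ((k : ℝ) + 1)⁻¹ ≤ |e 0|} ∩ G ⊆
      {e | ‖e‖ = 1 ∧ e ∈ G} := fun e he => ⟨he.1.1, he.2⟩
  rw [measure_mono_null hle h0, mul_zero]

/-- The inverse of `gnomonic` in homogeneous coordinates. -/
def scaleTail (x : Fin (m + 1) → ℝ) : Fin (m + 1) → ℝ :=
  Fin.cons (x 0) fun i => x 0 * x i.succ

lemma differentiable_scaleTail : Differentiable ℝ (scaleTail (m := m)) := by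
  refine differentiable_pi.2 fun i => ?_
  refine Fin.cases ?_ (fun i => ?_) i
  · simp only [scaleTail, Fin.cons_zero]; fun_prop
  · simp only [scaleTail, Fin.cons_succ]; fun_prop

lemma volume_preimage_head_tail (S : Set ℝ) (T : Set (Fin m → ℝ)) :
    volume {x : Fin (m + 1) → ℝ | x 0 ∈ S ∧ (fun i => x i.succ) ∈ T} = volume S * volume T := by
  have h := volume_preserving_piFinSuccAbove (fun _ : Fin (m + 1) => ℝ) 0
  rw [← Measure.prod_prod, ← Measure.volume_eq_prod, ← h.measure_preimage_equiv]
  rfl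

/-- A cone over a null subset of the sphere is null. -/
lemma volume_cone_eq_zero {G : Set (EuclideanSpace ℝ (Fin (m + 1)))}
    (hG : ∀ w ∈ G, ∀ c : ℝ, c ≠ 0 → c • w ∈ G)
    (h0 : μH[m] {e : EuclideanSpace ℝ (Fin (m + 1)) | ‖e‖ = 1 ∧ e ∈ G} = 0) :
    volume G = 0 := by
  set V := {v : Fin m → ℝ | WithLp.toLp 2 (Fin.cons 1 v : Fin (m + 1) → ℝ) ∈ G} with hV
  have hV0 : volume V = 0 := volume_affine_section_eq_zero hG h0
  have hpre : volume ((WithLp.toLp 2 : (Fin (m + 1) → ℝ) → _) ⁻¹' G) = 0 := by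
    have hsub : ((WithLp.toLp 2 : (Fin (m + 1) → ℝ) → _) ⁻¹' G) ⊆
        {x : Fin (m + 1) → ℝ | x 0 ∈ ({0} : Set ℝ) ∧ (fun i : Fin m => x i.succ) ∈ univ} ∪
          scaleTail '' {x | x 0 ∈ univ ∧ (fun i : Fin m => x i.succ) ∈ V} := by
      intro x hx
      by_cases hx0 : x 0 = 0
      · exact Or.inl ⟨hx0, mem_univ _⟩
      · refine Or.inr ⟨Fin.cons (x 0) fun i => (x 0)⁻¹ * x i.succ, ⟨mem_univ _, ?_⟩, ?_⟩
        · have h := hG _ hx (x 0)⁻¹ (inv_ne_zero hx0)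
          rw [hV, mem_ofPred_eq]
          convert h using 1
          ext i
          refine Fin.cases ?_ (fun i => ?_) i
          · simp [hx0]
          · simp
        · ext i
          refine Fin.cases ?_ (fun i => ?_) i
          · simp [scaleTail]
          · simp [scaleTail, hx0]
    refine measure_mono_null hsub (measure_union_null ?_ ?_)
    · rw [volume_preimage_head_tail]; simp
    · refine addHaar_image_eq_zero_of_differentiableOn_of_addHaar_eq_zero volume
        differentiable_scaleTail.differentiableOn ?_
      rw [volume_preimage_head_tail, hV0, mul_zero]
  rw [← hpre]
  exact (MeasurePreserving.measure_preimage_equiv (f := MeasurableEquiv.toLp 2 _)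
    (PiLp.volume_preserving_toLp (Fin (m + 1))) G).symm

end Cone

lemma smul_image_inter_image_interior_nonempty {n : ℕ} {A B : Set (EuclideanSpace ℝ (Fin n))}
    {w : EuclideanSpace ℝ (Fin n)}
    (hw : (interior ((fun x => ⟪x, w⟫) '' A ∩ (fun x => ⟪x, w⟫) '' B)).Nonempty) {c : ℝ}
    (hc : c ≠ 0) :
    (interior ((fun x => ⟪x, c • w⟫) '' A ∩ (fun x => ⟪x, c • w⟫) '' B)).Nonempty := by
  have himage : ∀ S : Set (EuclideanSpace ℝ (Fin n)),
      (fun x => ⟪x, c • w⟫) '' S = (c • ·) '' ((fun x => ⟪x, w⟫) '' S) := by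
    intro S
    rw [image_image]
    simp [inner_smul_right]
  obtain ⟨t, ht⟩ := hw
  rw [himage, himage, ← image_inter (smul_right_injective ℝ hc)]
  exact ⟨c • t, (isOpenMap_smul₀ hc).image_interior_subset _ (mem_image_of_mem _ ht)⟩

theorem stmt_2 (n : ℕ) (hn : 3 ≤ n)
    (A B : Set (EuclideanSpace ℝ (Fin n)))
    (hA : MeasurableSet A) (hB : MeasurableSet B)
    (hdA : 2 < dimH A) (hdB : 2 < dimH B) :
    0 < μH[(n : ℝ) - 1]
      {e : EuclideanSpace ℝ (Fin n) | ‖e‖ = 1 ∧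
        (interior ((fun x => ⟪x, e⟫) '' A ∩ (fun x => ⟪x, e⟫) '' B)).Nonempty} := by
  have hexp : ∀ S : Set (EuclideanSpace ℝ (Fin n)), 2 < dimH S →
      ∃ s : ℝ, 2 < s ∧ μH[s] S ≠ 0 := by
    intro S hS
    obtain ⟨s, hs2, hsS⟩ := ENNReal.lt_iff_exists_nnreal_btwn.1 hS
    refine ⟨s, by exact_mod_cast hs2, ?_⟩
    rw [hausdorffMeasure_of_lt_dimH hsS]
    exact ENNReal.top_ne_zero
  obtain ⟨s, hs, hsA⟩ := hexp A hdA
  obtain ⟨t, ht, htB⟩ := hexp B hdB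
  obtain ⟨μ, K, C, hμ, hKA, hK, hμK, hC, hμC⟩ :=
    exists_frostman_measure (by linarith) hA hsA
  obtain ⟨ν, L, D, hν, hLB, hL, hνL, hD, hνD⟩ :=
    exists_frostman_measure (by linarith) hB htB
  have hvol := volume_setOf_interior_inter_nonempty_ne_zero μ ν hs ht hC hD hμC hνD hK hL hμK hνL
  refine pos_iff_ne_zero.2 fun h0 => hvol ?_
  obtain ⟨m, rfl⟩ : ∃ m, n = m + 1 := ⟨n - 1, by omega⟩
  rw [Nat.cast_add, Nat.cast_one, add_sub_cancel_right] at h0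
  refine measure_mono_null ?_ (volume_cone_eq_zero (G := {w |
    (interior ((fun x => ⟪x, w⟫) '' A ∩ (fun x => ⟪x, w⟫) '' B)).Nonempty})
    (fun w hw c hc => smul_image_inter_image_interior_nonempty hw hc) h0)
  exact fun w hw => hw.mono
    (interior_mono (inter_subset_inter (image_mono hKA) (image_mono hLB)))
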